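/- Tail behaviour of negative powers of the absolute value of a Gaussian: Let G be a standard Gaussian random variable and let r > 0. Then lim_{x→∞} x^{1/r} · P( |G|^{−r} > x ) = √(2/π). Consequently the tail of |G|^{−r} is regularly varying with index −1/r. -/

import Mathlib

open MeasureTheory ProbabilityTheory Filter

noncomputable section


lemma gauss_aux_event {Ω : Type} [MeasurableSpace Ω] (P : Measure Ω)
    (G : Ω → ℝ) (hmeas : Measurable G)
    (hlaw : Measure.map G P = gaussianReal 0 1)
    (r : ℝ) (hr : 0 < r) (x : ℝ) (hx : 0 < x) :
    (P {ω | |G ω| ^ (-r) > x}).toReal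
      = ∫ t in (-(x ^ (-(1 / r))))..(x ^ (-(1 / r))), gaussianPDFReal 0 1 t := by
  set a := x ^ (-(1 / r)) with ha
  have ha0 : 0 < a := Real.rpow_pos_of_pos hx _
  have hax : a ^ (-r) = x := by
    rw [ha, ← Real.rpow_mul hx.le]
    have : -(1 / r) * -r = 1 := by field_simp
    rw [this, Real.rpow_one]
  have hset : {ω | |G ω| ^ (-r) > x} = G ⁻¹' (Set.Ioo (-a) a \ {0}) := by
    ext ω
    simp only [Set.mem_setOf_eq, Set.mem_preimage, Set.mem_diff, Set.mem_Ioo,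
      Set.mem_singleton_iff, ← abs_lt]
    by_cases h : G ω = 0
    · simp [h, Real.zero_rpow (neg_ne_zero.mpr hr.ne'), hx.le]
    · have hp : 0 < |G ω| := abs_pos.mpr h
      have h2 : |G ω| ^ (-r) > x ↔ |G ω| < a := by
        conv_lhs => rw [← hax]
        exact Real.rpow_lt_rpow_iff_of_neg ha0 hp (by linarith)
      simp [h2, h]
  have hm : MeasurableSet (Set.Ioo (-a) a \ {(0 : ℝ)}) :=
    measurableSet_Ioo.diff (measurableSet_singleton 0)
  rw [hset, ← Measure.map_apply hmeas hm, hlaw, gaussianReal_apply_eq_integral 0 one_ne_zero,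
    ENNReal.toReal_ofReal (integral_nonneg (fun t => gaussianPDFReal_nonneg 0 1 t)),
    intervalIntegral.integral_of_le (by linarith)]
  apply setIntegral_congr_set
  exact (diff_null_ae_eq_self (by simp)).trans Ioo_ae_eq_Ioc

lemma gauss_aux_deriv :
    Tendsto (fun a : ℝ => a⁻¹ * ∫ t in (-a)..a, gaussianPDFReal 0 1 t) (nhdsWithin 0 (Set.Ioi 0))
      (nhds (Real.sqrt (2 / Real.pi))) := by
  have hc : Continuous (gaussianPDFReal 0 1) := by
    unfold gaussianPDFReal
    fun_prop
  have hH : HasDerivAt (fun u : ℝ => ∫ t in (0:ℝ)..u, gaussianPDFReal 0 1 t)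
      (gaussianPDFReal 0 1 0) 0 := (hc.integral_hasStrictDerivAt 0 0).hasDerivAt
  have hH' : HasDerivAt (fun u : ℝ => ∫ t in (0:ℝ)..u, gaussianPDFReal 0 1 t)
      (gaussianPDFReal 0 1 0) (-0) := by simpa using hH
  have h2 := hH.sub (hH'.comp (0:ℝ) (hasDerivAt_neg 0))
  have hval : gaussianPDFReal 0 1 0 - gaussianPDFReal 0 1 0 * -1 = Real.sqrt (2 / Real.pi) := by
    have hpi := Real.pi_pos
    have : gaussianPDFReal 0 1 0 = (Real.sqrt (2 * Real.pi))⁻¹ := by simp [gaussianPDFReal]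
    rw [this, eq_comm, Real.sqrt_eq_iff_mul_self_eq (by positivity)]
    · have h := Real.mul_self_sqrt (show 0 ≤ 2 * Real.pi by positivity)
      have hs : 0 < Real.sqrt (2 * Real.pi) := by positivity
      field_simp
      nlinarith
    · ring_nf; positivity
  rw [hval] at h2
  have h3 := (hasDerivAt_iff_tendsto_slope_zero.mp h2).mono_left
    (nhdsWithin_mono 0 (fun a (h : (0:ℝ) < a) => (h.ne' : a ≠ 0)))
  refine h3.congr (fun a => ?_)
  have hi : ∀ u v : ℝ, IntervalIntegrable (gaussianPDFReal 0 1) volume u v :=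
    fun u v => hc.intervalIntegrable u v
  have := intervalIntegral.integral_interval_sub_left (hi 0 a) (hi 0 (-a))
  simp [← this]

/-- Tail behaviour of negative powers of the absolute value of a Gaussian: if `G` is
standard Gaussian and `r > 0`, then `x^{1/r} P(|G|^{-r} > x) → √(2/π)` as `x → ∞`;
consequently the tail of `|G|^{-r}` is regularly varying with index `-1/r`. -/
theorem tail_of_negative_power_of_gaussian
    {Ω : Type} [MeasurableSpace Ω] (P : Measure Ω) [IsProbabilityMeasure P]
    (G : Ω → ℝ) (hmeas : Measurable G)
    (hlaw : Measure.map G P = gaussianReal 0 1)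
    (r : ℝ) (hr : 0 < r) :
    Tendsto (fun x : ℝ =>
        x ^ (1 / r) * (P {ω | |G ω| ^ (-r) > x}).toReal) atTop
      (nhds (Real.sqrt (2 / Real.pi))) ∧
    ∀ c : ℝ, 0 < c →
      Tendsto (fun x : ℝ =>
          (P {ω | |G ω| ^ (-r) > c * x}).toReal / (P {ω | |G ω| ^ (-r) > x}).toReal)
        atTop (nhds (c ^ (-(1 / r)))) := by
  have key : Tendsto (fun x : ℝ =>
        x ^ (1 / r) * (P {ω | |G ω| ^ (-r) > x}).toReal) atTop
      (nhds (Real.sqrt (2 / Real.pi))) := by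
    have ht : Tendsto (fun x : ℝ => x ^ (-(1 / r))) atTop (nhdsWithin 0 (Set.Ioi 0)) := by
      rw [tendsto_nhdsWithin_iff]
      exact ⟨tendsto_rpow_neg_atTop (by positivity),
        (eventually_gt_atTop 0).mono fun x hx => Real.rpow_pos_of_pos hx _⟩
    refine (gauss_aux_deriv.comp ht).congr' ?_
    filter_upwards [eventually_gt_atTop 0] with x hx
    rw [gauss_aux_event P G hmeas hlaw r hr x hx]
    simp only [Function.comp]
    congr 1
    rw [Real.rpow_neg hx.le, inv_inv]
  refine ⟨key, fun c hc => ?_⟩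
  have hs : Real.sqrt (2 / Real.pi) ≠ 0 := by
    have := Real.pi_pos
    positivity
  have k2 := key.comp (tendsto_id.const_mul_atTop hc)
  have k3 := (k2.div key hs).const_mul (c ^ (-(1 / r)))
  rw [div_self hs, mul_one] at k3
  refine k3.congr' ?_
  filter_upwards [eventually_gt_atTop 0] with x hx
  have h1 : 0 < c ^ (1 / r) := Real.rpow_pos_of_pos hc _
  have h2 : 0 < x ^ (1 / r) := Real.rpow_pos_of_pos hx _
  simp only [Function.comp, id, Pi.div_apply]
  rw [Real.mul_rpow hc.le hx.le, Real.rpow_neg hc.le, mul_assoc, mul_div_assoc,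
    ← mul_assoc, inv_mul_cancel₀ h1.ne', one_mul, mul_div_mul_left _ _ h2.ne']
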